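/- If X ⊆ 𝒜^∞ is a d̄_M-stable shift space, then d̄_M^H(M_σ(X^M_n), M_σ(X)) → 0 as n → ∞, where X^M_n is the n-th Markov approximation of X. -/

import Mathlib

open MeasureTheory Filter Topology

namespace DbarPaper

variable {A : Type} [Fintype A] [DecidableEq A] [Inhabited A]
  [TopologicalSpace A] [DiscreteTopology A]
  [MeasurableSpace A] [MeasurableSingletonClass A]

/-- The shift map on the full shift `𝒜^∞ = ℕ → A`. -/
def shift : (ℕ → A) → (ℕ → A) := fun x n => x (n + 1)

/-- A shift space: a nonempty, closed, shift-invariant subset of the full shift. -/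
def ShiftSpace (X : Set (ℕ → A)) : Prop :=
  X.Nonempty ∧ IsClosed X ∧ ∀ x ∈ X, shift x ∈ X

/-- The word `w` appears in the sequence `x`. -/
def occursIn (w : List A) (x : ℕ → A) : Prop :=
  ∃ i : ℕ, w = List.ofFn (fun k : Fin w.length => x (i + (k : ℕ)))

/-- The language of a set `X`: all finite words appearing in points of `X`. -/
def lang (X : Set (ℕ → A)) : Set (List A) := {w | ∃ x ∈ X, occursIn w x}

/-- Words of length `n` in the language of `X`. -/
def langN (n : ℕ) (X : Set (ℕ → A)) : Set (List A) := {w | w ∈ lang X ∧ w.length = n}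

/-- The pseudometric `d̄` on the full shift. -/
noncomputable def dbar (x y : ℕ → A) : ℝ :=
  Filter.limsup
    (fun n => (((Finset.range n).filter (fun j => x j ≠ y j)).card : ℝ) / (n : ℝ))
    Filter.atTop

/-- Hausdorff "distance" between two sets induced by a `ℝ`-valued distance. -/
noncomputable def hausdist {Z : Type*} (d : Z → Z → ℝ) (P Q : Set Z) : ℝ :=
  max (⨆ p : P, ⨅ q : Q, d p q) (⨆ q : Q, ⨅ p : P, d p q)

/-- A probability measure is shift-invariant. -/
def invariantPM (μ : ProbabilityMeasure (ℕ → A)) : Prop :=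
  (μ : Measure (ℕ → A)).map shift = (μ : Measure (ℕ → A))

/-- `M_σ(X)`: shift-invariant Borel probability measures giving `X` full measure. -/
def Msigma (X : Set (ℕ → A)) : Set (ProbabilityMeasure (ℕ → A)) :=
  {μ | invariantPM μ ∧ μ X = 1}

/-- `ξ` is a joining of `μ` and `ν`: a `σ×σ`-invariant measure on the product with
marginals `μ` and `ν`. -/
def IsJoining (ξ : Measure ((ℕ → A) × (ℕ → A))) (μ ν : ProbabilityMeasure (ℕ → A)) : Prop :=
  ξ.map (Prod.map shift shift) = ξ ∧
  ξ.map Prod.fst = (μ : Measure (ℕ → A)) ∧ ξ.map Prod.snd = (ν : Measure (ℕ → A))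

/-- Ornstein's metric `d̄_M` on invariant measures. -/
noncomputable def dbarM (μ ν : ProbabilityMeasure (ℕ → A)) : ℝ :=
  sInf {r : ℝ | ∃ ξ : Measure ((ℕ → A) × (ℕ → A)),
    IsJoining ξ μ ν ∧ r = (ξ {p | p.1 0 ≠ p.2 0}).toReal}

/-- `d̄_M`-stability of a shift space (Austin). -/
def DbarMStable (X : Set (ℕ → A)) : Prop :=
  ∀ ε : ℝ, 0 < ε → ∃ U : Set (ProbabilityMeasure (ℕ → A)), IsOpen U ∧ Msigma X ⊆ U ∧
    ∀ ν ∈ U, invariantPM ν → ∃ μ ∈ Msigma X, dbarM μ ν < ε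

/-- The infinite concatenation of a sequence of (nonempty) words. -/
def concatSeq (w : ℕ → List A) : ℕ → A := fun n =>
  ((List.ofFn (fun i : Fin (n + 1) => w (i : ℕ))).flatten).getD n default

/-- The `d̄`-shadowing property. -/
def DbarShadowing (X : Set (ℕ → A)) : Prop :=
  ∀ ε : ℝ, 0 < ε → ∃ N : ℕ, 0 < N ∧ ∀ w : ℕ → List A,
    (∀ j, w j ∈ lang X) → (∀ j, N ≤ (w j).length) →
    ∃ x' ∈ X, dbar (concatSeq w) x' < ε

/-- `U_n(X)`: the union of cylinders of words of length `n` in the language of `X`. -/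
def cylNbhd (X : Set (ℕ → A)) (n : ℕ) : Set (ℕ → A) :=
  {x | List.ofFn (fun k : Fin n => x (k : ℕ)) ∈ lang X}

/-- The `n`-th (topological) Markov approximation of `X`: all sequences whose subwords of
length `n+1` belong to the language of `X`. -/
def markovApprox (X : Set (ℕ → A)) (n : ℕ) : Set (ℕ → A) :=
  {x | ∀ i : ℕ, List.ofFn (fun k : Fin (n + 1) => x (i + (k : ℕ))) ∈ lang X}

/-- Transitivity, in terms of the language. -/
def TransitiveShift (X : Set (ℕ → A)) : Prop :=
  ∀ u ∈ lang X, ∀ w ∈ lang X, ∃ v : List A, u ++ v ++ w ∈ lang X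

/-- Topological mixing, in terms of the language. -/
def MixingShift (X : Set (ℕ → A)) : Prop :=
  ∀ u ∈ lang X, ∀ w ∈ lang X, ∃ N : ℕ, ∀ m : ℕ, N ≤ m →
    ∃ v : List A, v.length = m ∧ u ++ v ++ w ∈ lang X

/-- Chain mixing: all but finitely many Markov approximations are topologically mixing. -/
def ChainMixing (X : Set (ℕ → A)) : Prop :=
  ∃ N : ℕ, ∀ n : ℕ, N ≤ n → MixingShift (markovApprox X n)

/-- `C` is the measure center of `X`: the smallest shift space contained in `X` of full
measure for every invariant measure of `X`. -/
def IsMeasureCenter (X C : Set (ℕ → A)) : Prop :=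
  ShiftSpace C ∧ C ⊆ X ∧ (∀ μ ∈ Msigma X, μ C = 1) ∧
  ∀ Y : Set (ℕ → A), ShiftSpace Y → Y ⊆ X → (∀ μ ∈ Msigma X, μ Y = 1) → C ⊆ Y

/-- Measure of the cylinder determined by a word of length `n`. -/
noncomputable def cylMeasure (μ : ProbabilityMeasure (ℕ → A)) {n : ℕ} (w : Fin n → A) : ℝ :=
  ((μ : Measure (ℕ → A)) {x | ∀ k : Fin n, x (k : ℕ) = w k}).toReal

/-- Entropy of the partition into cylinders of length `n`. -/
noncomputable def blockEntropy (μ : ProbabilityMeasure (ℕ → A)) (n : ℕ) : ℝ :=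
  -∑ w : Fin n → A, cylMeasure μ w * Real.log (cylMeasure μ w)

/-- Kolmogorov–Sinai entropy of a shift-invariant measure. -/
noncomputable def ksEntropy (μ : ProbabilityMeasure (ℕ → A)) : ℝ :=
  Filter.limsup (fun n => blockEntropy μ n / (n : ℝ)) Filter.atTop

/-- `μ` is ergodic for the shift. -/
def ErgodicPM (μ : ProbabilityMeasure (ℕ → A)) : Prop :=
  Ergodic shift (μ : Measure (ℕ → A))

/-- Ergodic measures are entropy dense in `M_σ(X)`. -/
def EntropyDense (X : Set (ℕ → A)) : Prop :=
  ∀ μ ∈ Msigma X, ∀ U : Set (ProbabilityMeasure (ℕ → A)), IsOpen U → μ ∈ U →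
    ∀ ε : ℝ, 0 < ε →
      ∃ ν ∈ Msigma X, ν ∈ U ∧ ErgodicPM ν ∧ |ksEntropy ν - ksEntropy μ| < ε

/-- Topological entropy of a shift space. -/
noncomputable def topEntropy (X : Set (ℕ → A)) : ℝ :=
  Filter.limsup (fun n => Real.log (Nat.card ↥(langN n X)) / (n : ℝ)) Filter.atTop

/-- The standard metric on the full shift. -/
noncomputable def rho (x y : ℕ → A) : ℝ :=
  open scoped Classical in
  if x = y then 0 else (2 : ℝ) ^ (-((sInf {j : ℕ | x j ≠ y j} : ℕ) : ℤ))

/-- Proximality of a shift space. -/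
def ProximalShift (X : Set (ℕ → A)) : Prop :=
  ∀ x ∈ X, ∀ y ∈ X,
    Filter.liminf (fun n => rho (shift^[n] x) (shift^[n] y)) Filter.atTop = 0

/-- Minimality of a shift space. -/
def MinimalShift (X : Set (ℕ → A)) : Prop :=
  ShiftSpace X ∧ ∀ Y : Set (ℕ → A), ShiftSpace Y → Y ⊆ X → Y = X

/-- An `A`-labeled directed multigraph on vertices `V` with edges `E`. -/
structure LabeledGraph (A V E : Type*) where
  src : E → V
  dst : E → V
  lab : E → A

namespace LabeledGraph

variable {A' V E : Type*}

/-- `es` is a path in `G` from `u` to `v`. -/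
def PathFromTo (G : LabeledGraph A' V E) (es : List E) (u v : V) : Prop :=
  es.Chain' (fun e f => G.dst e = G.src f) ∧
  es.head?.map G.src = some u ∧ es.getLast?.map G.dst = some v

/-- `G` is strongly connected. -/
def StronglyConnected (G : LabeledGraph A' V E) : Prop :=
  ∀ u v : V, ∃ es : List E, G.PathFromTo es u v

/-- `d` is the period of `G`: the gcd of lengths of closed paths. -/
def HasPeriod (G : LabeledGraph A' V E) (d : ℕ) : Prop :=
  (∀ (es : List E) (u : V), G.PathFromTo es u u → d ∣ es.length) ∧
  ∀ d' : ℕ, (∀ (es : List E) (u : V), G.PathFromTo es u u → d' ∣ es.length) → d' ∣ d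

/-- `b` is a safe symbol for `G`. -/
def SafeSymbol (G : LabeledGraph A' V E) (b : A') : Prop :=
  ∀ e : E, ∃ e' : E, G.src e' = G.src e ∧ G.dst e' = G.dst e ∧ G.lab e' = b

/-- The shift space presented by the labeled graph `G`: labels read along infinite paths. -/
def presents (G : LabeledGraph A' V E) : Set (ℕ → A') :=
  {x | ∃ e : ℕ → E, (∀ j, G.dst (e j) = G.src (e (j + 1))) ∧ ∀ j, x j = G.lab (e j)}

end LabeledGraph

/-- The coupling of a family of labeled graphs: an edge labeled `a` from `v` to `v'` exists
iff each `G k` has an edge from `v k` to `v' k` labeled `a`. -/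
def coupling {A' : Type*} {n : ℕ} {V E : Fin n → Type*}
    (G : ∀ k, LabeledGraph A' (V k) (E k)) :
    LabeledGraph A' (∀ k, V k) {p : (∀ k, E k) × A' // ∀ k, (G k).lab (p.1 k) = p.2} where
  src p := fun k => (G k).src (p.1.1 k)
  dst p := fun k => (G k).dst (p.1.1 k)
  lab p := p.1.2

/-- Sofic shift spaces: those presented by some finite labeled graph. -/
def Sofic (X : Set (ℕ → A)) : Prop :=
  ∃ (V E : Type) (_ : Fintype V) (_ : Fintype E) (G : LabeledGraph A V E),
    X = G.presents

/-- The coded shift generated by a finite set of words `B`: the closure of the set of all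
shifts of infinite concatenations of words from `B`. -/
def codedShift (B : Finset (List A)) : Set (ℕ → A) :=
  closure {x | ∃ (b : ℕ → List A) (k : ℕ), (∀ i, b i ∈ B) ∧ x = shift^[k] (concatSeq b)}


set_option linter.unusedSectionVars false

theorem dbarM_nonneg (μ ν : ProbabilityMeasure (ℕ → A)) : 0 ≤ dbarM μ ν := by
  apply Real.sInf_nonneg
  rintro r ⟨ξ, -, rfl⟩
  exact ENNReal.toReal_nonneg

theorem continuous_shift : Continuous (shift : (ℕ → A) → (ℕ → A)) :=
  continuous_pi fun n => continuous_apply (n + 1)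

theorem measurable_shift : Measurable (shift : (ℕ → A) → (ℕ → A)) :=
  measurable_pi_lambda _ fun n => measurable_pi_apply (n + 1)

theorem IsJoining.swap {ξ : Measure ((ℕ → A) × (ℕ → A))} {μ ν : ProbabilityMeasure (ℕ → A)}
    (h : IsJoining ξ μ ν) : IsJoining (ξ.map Prod.swap) ν μ := by
  obtain ⟨hinv, hfst, hsnd⟩ := h
  refine ⟨?_, ?_, ?_⟩
  · rw [Measure.map_map (measurable_shift.prodMap measurable_shift) measurable_swap]
    conv_rhs => rw [← hinv]
    rw [Measure.map_map measurable_swap (measurable_shift.prodMap measurable_shift)]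
    rfl
  · rw [Measure.map_map measurable_fst measurable_swap, ← hsnd]
    rfl
  · rw [Measure.map_map measurable_snd measurable_swap, ← hfst]
    rfl

theorem measurableSet_apply_zero_ne :
    MeasurableSet {p : (ℕ → A) × (ℕ → A) | p.1 0 ≠ p.2 0} :=
  (measurableSet_eq_fun ((measurable_pi_apply 0).comp measurable_fst)
    ((measurable_pi_apply 0).comp measurable_snd)).compl

theorem dbarM_comm (μ ν : ProbabilityMeasure (ℕ → A)) : dbarM μ ν = dbarM ν μ := by
  have key : ∀ {μ ν : ProbabilityMeasure (ℕ → A)} {r : ℝ},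
      (∃ ξ : Measure ((ℕ → A) × (ℕ → A)),
        IsJoining ξ μ ν ∧ r = (ξ {p | p.1 0 ≠ p.2 0}).toReal) →
      ∃ ξ : Measure ((ℕ → A) × (ℕ → A)),
        IsJoining ξ ν μ ∧ r = (ξ {p | p.1 0 ≠ p.2 0}).toReal := by
    rintro μ ν r ⟨ξ, hξ, rfl⟩
    refine ⟨ξ.map Prod.swap, hξ.swap, ?_⟩
    rw [Measure.map_apply measurable_swap measurableSet_apply_zero_ne]
    simp only [Set.preimage_ofPred_eq, Prod.fst_swap, Prod.snd_swap, ne_comm]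
  exact congrArg sInf (Set.ext fun r => ⟨key, key⟩)

theorem dbarM_self {μ : ProbabilityMeasure (ℕ → A)} (hμ : invariantPM μ) : dbarM μ μ = 0 := by
  have hdiag : Measurable fun x : ℕ → A => (x, x) := measurable_id.prodMk measurable_id
  refine le_antisymm (csInf_le ⟨0, ?_⟩ ⟨(μ : Measure (ℕ → A)).map fun x => (x, x), ?_, ?_⟩)
    (dbarM_nonneg μ μ)
  · rintro r ⟨ξ, -, rfl⟩
    exact ENNReal.toReal_nonneg
  · refine ⟨?_, ?_, ?_⟩
    · rw [Measure.map_map (measurable_shift.prodMap measurable_shift) hdiag]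
      conv_rhs => rw [← hμ, Measure.map_map hdiag measurable_shift]
      rfl
    · rw [Measure.map_map measurable_fst hdiag]
      exact Measure.map_id
    · rw [Measure.map_map measurable_snd hdiag]
      exact Measure.map_id
  · rw [Measure.map_apply hdiag measurableSet_apply_zero_ne]
    simp

/-- If `P` and `Q` are within `ε` of each other in both directions, then so is their
Hausdorff distance. -/
theorem hausdist_le {Z : Type*} {d : Z → Z → ℝ} {P Q : Set Z} {ε : ℝ} (hε : 0 ≤ ε)
    (hd : ∀ p q, 0 ≤ d p q) (hP : ∀ p ∈ P, ∃ q ∈ Q, d p q ≤ ε)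
    (hQ : ∀ q ∈ Q, ∃ p ∈ P, d p q ≤ ε) : hausdist d P Q ≤ ε := by
  refine max_le (Real.iSup_le (fun p => ?_) hε) (Real.iSup_le (fun q => ?_) hε)
  · obtain ⟨q, hq, hpq⟩ := hP p p.2
    exact ciInf_le_of_le ⟨0, by rintro _ ⟨q, rfl⟩; exact hd _ _⟩ (⟨q, hq⟩ : Q) hpq
  · obtain ⟨p, hp, hpq⟩ := hQ q q.2
    exact ciInf_le_of_le ⟨0, by rintro _ ⟨p, rfl⟩; exact hd _ _⟩ (⟨p, hp⟩ : P) hpq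

theorem hausdist_nonneg {Z : Type*} {d : Z → Z → ℝ} (hd : ∀ p q, 0 ≤ d p q) (P Q : Set Z) :
    0 ≤ hausdist d P Q :=
  le_max_of_le_left (Real.iSup_nonneg fun _ => Real.iInf_nonneg fun _ => hd _ _)

theorem ofFn_mem_lang {X : Set (ℕ → A)} {x : ℕ → A} (hx : x ∈ X) (i n : ℕ) :
    List.ofFn (fun k : Fin n => x (i + (k : ℕ))) ∈ lang X :=
  ⟨x, hx, i, by apply List.ext_getElem <;> simp⟩

theorem subset_markovApprox (X : Set (ℕ → A)) (n : ℕ) : X ⊆ markovApprox X n :=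
  fun _ hx i => ofFn_mem_lang hx i (n + 1)

theorem isClosed_markovApprox (X : Set (ℕ → A)) (n : ℕ) : IsClosed (markovApprox X n) := by
  have : markovApprox X n =
      ⋂ i : ℕ, (fun x : ℕ → A => fun k : Fin (n + 1) => x (i + (k : ℕ))) ⁻¹'
        {w | List.ofFn w ∈ lang X} := by
    ext x
    simp [markovApprox]
  rw [this]
  have hcont (i : ℕ) : Continuous fun (x : ℕ → A) (k : Fin (n + 1)) => x (i + (k : ℕ)) :=
    continuous_pi fun k => continuous_apply (i + (k : ℕ))
  exact isClosed_iInter fun i => (isClosed_discrete _).preimage (hcont i)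

/-- A word of the language of a shift space is a prefix of one of its points. -/
theorem exists_mem_prefix_eq {X : Set (ℕ → A)} (hX : ∀ x ∈ X, shift x ∈ X) {n : ℕ}
    {w : Fin n → A} (hw : List.ofFn w ∈ lang X) : ∃ y ∈ X, ∀ k : Fin n, y k = w k := by
  obtain ⟨x, hx, i, hi⟩ := hw
  have hmem : ∀ i : ℕ, (fun k => x (i + k)) ∈ X := by
    intro i
    induction i with
    | zero => simpa using hx
    | succ i ih =>
      convert hX _ ih using 1
      funext k
      simp only [shift]
      congr 1
      omega
  refine ⟨_, hmem i, fun k => ?_⟩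
  have := congrArg (fun l : List A => l[(k : ℕ)]?) hi
  simpa using this.symm

theorem antitone_markovApprox {X : Set (ℕ → A)} (hX : ∀ x ∈ X, shift x ∈ X) :
    Antitone (markovApprox X) := by
  intro m n hmn x hx i
  obtain ⟨y, hy, hyx⟩ := exists_mem_prefix_eq hX (hx i)
  convert ofFn_mem_lang hy 0 (m + 1) using 2
  funext k
  simpa using (hyx ⟨k, by omega⟩).symm

theorem iInter_markovApprox {X : Set (ℕ → A)} (hX : ShiftSpace X) :
    ⋂ n, markovApprox X n = X := by
  refine Set.Subset.antisymm (fun x hx => ?_) (Set.subset_iInter (subset_markovApprox X))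
  rw [Set.mem_iInter] at hx
  choose y hy hyx using fun n => exists_mem_prefix_eq hX.2.2 (hx n 0)
  refine hX.2.1.mem_of_tendsto (f := y) (b := atTop) (tendsto_pi_nhds.2 fun k => ?_)
    (Eventually.of_forall hy)
  refine tendsto_const_nhds.congr' ?_
  filter_upwards [eventually_ge_atTop k] with n hn
  simpa using (hyx n ⟨k, by omega⟩).symm

theorem isClosed_setOf_measure_eq_one {F : Set (ℕ → A)} (hF : IsClosed F) :
    IsClosed {μ : ProbabilityMeasure (ℕ → A) | μ F = 1} := by
  rw [isClosed_iff_forall_filter]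
  intro μ L _ hL hμ
  have hle := ProbabilityMeasure.limsup_measure_closed_le_of_tendsto (tendsto_id'.2 hμ) hF
  have hev : ∀ᶠ ν : ProbabilityMeasure (ℕ → A) in L,
      ((id ν : ProbabilityMeasure (ℕ → A)) : Measure (ℕ → A)) F = 1 := by
    filter_upwards [le_principal_iff.1 hL] with ν hν
    have hν' : ν F = 1 := hν
    rw [id, ← ProbabilityMeasure.ennreal_coeFn_eq_coeFn_toMeasure, hν', ENNReal.coe_one]
  rw [limsup_congr hev, limsup_const] at hle
  rw [Set.mem_ofPred_eq, ← ENNReal.coe_inj, ProbabilityMeasure.ennreal_coeFn_eq_coeFn_toMeasure]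
  exact le_antisymm prob_le_one hle

theorem isClosed_setOf_invariantPM :
    IsClosed {μ : ProbabilityMeasure (ℕ → A) | invariantPM μ} := by
  have hcont := ProbabilityMeasure.continuous_map (continuous_shift (A := A))
  convert isClosed_eq hcont continuous_id using 1
  ext μ
  exact (Subtype.ext_iff (a1 := μ.map continuous_shift.measurable.aemeasurable) (a2 := μ)).symm

theorem isClosed_Msigma {F : Set (ℕ → A)} (hF : IsClosed F) : IsClosed (Msigma F) :=
  isClosed_setOf_invariantPM.inter (isClosed_setOf_measure_eq_one hF)

theorem Msigma_mono {F G : Set (ℕ → A)} (h : F ⊆ G) : Msigma F ⊆ Msigma G := by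
  rintro μ ⟨hinv, hμ⟩
  refine ⟨hinv, le_antisymm (μ.apply_le_one G) ?_⟩
  exact hμ ▸ μ.apply_mono h

theorem iInter_Msigma_markovApprox {X : Set (ℕ → A)} (hX : ShiftSpace X) :
    ⋂ n, Msigma (markovApprox X n) = Msigma X := by
  refine Set.Subset.antisymm (fun μ hμ => ?_)
    (Set.subset_iInter fun n => Msigma_mono (subset_markovApprox X n))
  rw [Set.mem_iInter] at hμ
  refine ⟨(hμ 0).1, ?_⟩
  have hae : ∀ᵐ x ∂(μ : Measure (ℕ → A)), ∀ n, x ∈ markovApprox X n := by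
    refine ae_all_iff.2 fun n => ?_
    refine (prob_compl_eq_zero_iff (isClosed_markovApprox X n).measurableSet).2 ?_
    rw [← ProbabilityMeasure.ennreal_coeFn_eq_coeFn_toMeasure, (hμ n).2, ENNReal.coe_one]
  rw [← ENNReal.coe_inj, ProbabilityMeasure.ennreal_coeFn_eq_coeFn_toMeasure, ENNReal.coe_one,
    ← prob_compl_eq_zero_iff hX.2.1.measurableSet]
  filter_upwards [hae] with x hx
  rw [← iInter_markovApprox hX]
  exact Set.mem_iInter.2 hx

/-- Every neighborhood of `M_σ(X)` contains `M_σ` of all sufficiently good Markov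
approximations of `X`. -/
theorem eventually_Msigma_markovApprox_subset {X : Set (ℕ → A)} (hX : ShiftSpace X)
    {U : Set (ProbabilityMeasure (ℕ → A))} (hU : IsOpen U) (hXU : Msigma X ⊆ U) :
    ∀ᶠ n in atTop, Msigma (markovApprox X n) ⊆ U := by
  have hanti : Antitone fun n => Msigma (markovApprox X n) :=
    fun _ _ hmn => Msigma_mono (antitone_markovApprox hX.2.2 hmn)
  have hclosed n := isClosed_Msigma (isClosed_markovApprox X n)
  obtain ⟨N, hN⟩ := exists_subset_nhds_of_isCompact' (directed_of_isDirected_le hanti)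
    (fun n => (hclosed n).isCompact) hclosed
    fun μ hμ => hU.mem_nhds (hXU (iInter_Msigma_markovApprox hX ▸ hμ))
  filter_upwards [eventually_ge_atTop N] with n hn
  exact (hanti hn).trans hN

/-- `d̄_M`-stability implies `d̄_M^H`-convergence of the simplices of invariant
measures of the Markov approximations. -/
theorem statement4 (hA : 2 ≤ Fintype.card A) (X : Set (ℕ → A)) (hX : ShiftSpace X)
    (hstab : DbarMStable X) :
    Filter.Tendsto (fun n => hausdist dbarM (Msigma (markovApprox X n)) (Msigma X))
      Filter.atTop (nhds 0) := by
  have hbound : ∀ ε : ℝ, 0 < ε →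
      ∀ᶠ n in atTop, hausdist dbarM (Msigma (markovApprox X n)) (Msigma X) ≤ ε := by
    intro ε hε
    obtain ⟨U, hU, hXU, hst⟩ := hstab ε hε
    filter_upwards [eventually_Msigma_markovApprox_subset hX hU hXU] with n hn
    refine hausdist_le hε.le dbarM_nonneg (fun ν hν => ?_) fun μ hμ => ?_
    · obtain ⟨μ, hμ, hlt⟩ := hst ν (hn hν) hν.1
      exact ⟨μ, hμ, dbarM_comm μ ν ▸ hlt.le⟩
    · exact ⟨μ, Msigma_mono (subset_markovApprox X n) hμ, (dbarM_self hμ.1).trans_le hε.le⟩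
  rw [Metric.tendsto_nhds]
  intro ε hε
  filter_upwards [hbound (ε / 2) (half_pos hε)] with n hn
  rw [Real.dist_0_eq_abs, abs_of_nonneg (hausdist_nonneg dbarM_nonneg _ _)]
  linarith

end DbarPaper
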